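/- Let μ be an s-graphon, let k ∈ ℕ, let f_1,…,f_k be non-negative continuous functions on [0,1] whose sum is the constant function 1 and with ∫ f_i dλ = 1/k for each i, and let M(i,j) = ∫_{[0,1]²} f_i(x) f_j(y) dμ(x,y). Define g : [0,1]² → [0,k] by g(x,y) = k·f_i(x) for y ∈ I_i, where I_i = [(i−1)/k, i/k) for i < k and I_k = [(k−1)/k, 1]. Then g is a bounded Borel fairly distributed function and Φ(g,μ) = μ_M. -/

import Mathlib

open MeasureTheory Topology Filter

noncomputable section

/-- The unit square `[0,1]²`. -/
abbrev Sq : Type := unitInterval × unitInterval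

/-- Convergence of a sequence of subsets in the Vietoris topology
(upper + lower Vietoris convergence). -/
def VietorisTendsto {X : Type*} [TopologicalSpace X] (A : ℕ → Set X) (B : Set X) : Prop :=
  (∀ U : Set X, IsOpen U → B ⊆ U → ∀ᶠ n in atTop, A n ⊆ U) ∧
  (∀ U : Set X, IsOpen U → (B ∩ U).Nonempty → ∀ᶠ n in atTop, (A n ∩ U).Nonempty)

/-- A measure on the unit square is symmetric if it is invariant under the coordinate swap. -/
def IsSymmSq (μ : Measure Sq) : Prop := μ.map Prod.swap = μ

/-- s-graphons: symmetric Borel probability measures on the unit square,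
with the weak topology. -/
def SGraphon : Type := {μ : ProbabilityMeasure Sq // IsSymmSq (μ : Measure Sq)}

instance : TopologicalSpace SGraphon :=
  inferInstanceAs (TopologicalSpace {μ : ProbabilityMeasure Sq // IsSymmSq (μ : Measure Sq)})

/-- The underlying measure of an s-graphon. -/
def SGraphon.toMeasure (μ : SGraphon) : Measure Sq := (μ.1 : Measure Sq)

/-- A non-negative bounded Borel function on the unit square is fairly distributed
if all its horizontal and vertical sections integrate (w.r.t. Lebesgue measure) to 1. -/
structure FairlyDistributed (f : Sq → ℝ) : Prop where
  measurable : Measurable f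
  nonneg : ∀ p, 0 ≤ f p
  bounded : ∃ C : ℝ, ∀ p, f p ≤ C
  row : ∀ x : unitInterval, ∫ v, f (x, v) = 1
  col : ∀ y : unitInterval, ∫ u, f (u, y) = 1

/-- The density `φ(f,μ)`. -/
def phiFn (f : Sq → ℝ) (μ : Measure Sq) (p : Sq) : ℝ :=
  ∫ q, f (q.1, p.1) * f (q.2, p.2) ∂μ

/-- The measure `Φ(f,μ)`, with density `φ(f,μ)` w.r.t. 2-dimensional Lebesgue measure. -/
def PhiMeas (f : Sq → ℝ) (μ : Measure Sq) : Measure Sq :=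
  volume.withDensity fun p => ENNReal.ofReal (phiFn f μ p)

/-- The shape of a measure `μ` on the unit square: the weak closure of the set of
(s-graphons corresponding to) the measures `Φ(f,μ)`, `f` continuous fairly distributed. -/
def shapeM (μ : Measure Sq) : Set SGraphon :=
  closure {ν : SGraphon | ∃ f : Sq → ℝ, FairlyDistributed f ∧ Continuous f ∧
    ν.toMeasure = PhiMeas f μ}

/-- The shape `C(μ)` of an s-graphon. -/
def shape (μ : SGraphon) : Set SGraphon := shapeM μ.toMeasure

/-- A fractional partition into `k` parts: non-negative Borel functions on `[0,1]`
summing to the constant function 1, each integrating to `1/k`. -/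
def IsFracPartition (k : ℕ) (f : Fin k → unitInterval → ℝ) : Prop :=
  (∀ i, Measurable (f i)) ∧ (∀ i x, 0 ≤ f i x) ∧ (∀ x, ∑ i, f i x = 1) ∧
    ∀ i, ∫ x, f i x = 1 / k

/-- The `k`-shape `C(μ,k)`: the closure in `ℝ^{k×k}` of the set of density matrices of
fractional partitions into `k` parts. -/
def kShape (μ : Measure Sq) (k : ℕ) : Set (Matrix (Fin k) (Fin k) ℝ) :=
  closure {M | ∃ f : Fin k → unitInterval → ℝ, IsFracPartition k f ∧
    ∀ i j, M i j = ∫ p, f i p.1 * f j p.2 ∂μ}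

/-- `M_k^*`: symmetric `k×k` matrices with non-negative entries summing to 1. -/
def Mstar (k : ℕ) : Set (Matrix (Fin k) (Fin k) ℝ) :=
  {M | M.IsSymm ∧ (∀ i j, 0 ≤ M i j) ∧ ∑ i, ∑ j, M i j = 1}

/-- The index `i` (0-based) with `u ∈ [i/k, (i+1)/k)` (and `i = k-1` for `u = 1`). -/
def gridIdx (k : ℕ) (hk : 0 < k) (u : unitInterval) : Fin k :=
  ⟨min ⌊(u : ℝ) * k⌋₊ (k - 1), lt_of_le_of_lt (min_le_right _ _) (Nat.sub_lt hk one_pos)⟩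

/-- The measure `μ_M` associated to a `k×k` matrix `M`: its density w.r.t. 2-dimensional
Lebesgue measure equals `k² M(i,j)` on the square `[i/k,(i+1)/k) × [j/k,(j+1)/k)` (0-based). -/
def muM {k : ℕ} (M : Matrix (Fin k) (Fin k) ℝ) : Measure Sq :=
  if hk : 0 < k then
    volume.withDensity fun p =>
      ENNReal.ofReal ((k : ℝ) ^ 2 * M (gridIdx k hk p.1) (gridIdx k hk p.2))
  else 0

/-- `C̃(μ,k)`: the `k`-shape of `μ`, interpreted as a set of s-graphons. -/
def kShapeTilde (μ : Measure Sq) (k : ℕ) : Set SGraphon :=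
  {ν : SGraphon | ∃ M ∈ kShape μ k, ν.toMeasure = muM M}

/-- The interval `I_i = [i/k, (i+1)/k)` (0-based), with `I_{k-1} = [(k-1)/k, 1]`,
as a subset of `[0,1]`. -/
def Ik (k : ℕ) (i : Fin k) : Set unitInterval :=
  if (i : ℕ) + 1 = k then Subtype.val ⁻¹' Set.Icc (((i : ℕ) : ℝ) / k) 1
  else Subtype.val ⁻¹' Set.Ico (((i : ℕ) : ℝ) / k) ((((i : ℕ) : ℝ) + 1) / k)

/-!
The index map `u ↦ i` for `u ∈ I_i` pushes Lebesgue measure forward to the uniform measure on the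
`k` indices. A row of `g` therefore integrates to `∑ i, f_i(x) = 1`, while a column is `k f_i` for a
fixed `i` and integrates to `1`. Finally `g(x,u) g(y,v) = k² f_i(x) f_j(y)` for
`u ∈ I_i` and `v ∈ I_j`, and integrating this against `μ` in `(x,y)` gives the density of `μ_M`.
-/

/-- The density matrix `M(i,j) = ∫ f_i(x) f_j(y) dμ(x,y)` of a family of functions on `[0,1]` with
respect to a measure on the unit square. -/
def densityMatrix {k : ℕ} (f : Fin k → unitInterval → ℝ) (μ : Measure Sq) :
    Matrix (Fin k) (Fin k) ℝ :=
  fun i j => ∫ p, f i p.1 * f j p.2 ∂μ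

/-- The function `g(x,y) = k f_i(x)` for `y ∈ I_i`, which realises a fractional partition
`f_1, …, f_k` as a fairly distributed function. -/
def stepKernel {k : ℕ} (hk : 0 < k) (f : Fin k → unitInterval → ℝ) (p : Sq) : ℝ :=
  k * f (gridIdx k hk p.2) p.1

section GridIdx

variable {k : ℕ} (hk : 0 < k)

lemma measurable_gridIdx : Measurable (gridIdx k hk) := by
  refine (measurable_from_top : Measurable fun n : ℕ => (⟨min n (k - 1), by lia⟩ : Fin k)).comp ?_
  exact Nat.measurable_floor.comp (by fun_prop)

lemma gridIdx_eq_iff_mem_Ik {u : unitInterval} {i : Fin k} :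
    gridIdx k hk u = i ↔ u ∈ Ik k i := by
  have hk' : (0 : ℝ) < k := by exact_mod_cast hk
  have hu : 0 ≤ (u : ℝ) * k := mul_nonneg u.2.1 hk'.le
  have left_endpoint_le : (i : ℝ) / k ≤ u ↔ (i : ℕ) ≤ ⌊(u : ℝ) * k⌋₊ := by
    rw [div_le_iff₀ hk', Nat.le_floor_iff hu]
  have lt_right_endpoint : (u : ℝ) < ((i : ℝ) + 1) / k ↔ ⌊(u : ℝ) * k⌋₊ < (i : ℕ) + 1 := by
    rw [lt_div_iff₀ hk', Nat.floor_lt hu, Nat.cast_add_one]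
  rw [gridIdx, Fin.ext_iff, Ik]
  split_ifs with hlast
  · simp only [Set.mem_preimage, Set.mem_Icc, left_endpoint_le, u.2.2, and_true]
    lia
  · simp only [Set.mem_preimage, Set.mem_Ico, left_endpoint_le, lt_right_endpoint]
    lia

lemma volume_Ik (i : Fin k) : volume (Ik k i) = (k : ENNReal)⁻¹ := by
  have hk' : (0 : ℝ) < k := by exact_mod_cast i.pos
  have hi : (i : ℝ) + 1 ≤ k := by exact_mod_cast i.2
  have left_nonneg : 0 ≤ (i : ℝ) / k := by positivity
  have right_le_one : ((i : ℝ) + 1) / k ≤ 1 := (div_le_one hk').2 hi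
  have length_eq : ((i : ℝ) + 1) / k - i / k = (k : ℝ)⁻¹ := by ring
  rw [← ENNReal.ofReal_natCast, ← ENNReal.ofReal_inv_of_pos hk', ← length_eq, Ik]
  split_ifs with hlast
  · have right_eq_one : ((i : ℝ) + 1) / k = 1 := (div_eq_one_iff_eq hk'.ne').2 (mod_cast hlast)
    rw [unitInterval.volume_apply, Subtype.image_preimage_coe, Set.inter_eq_self_of_subset_right
      (Set.Icc_subset_Icc_left left_nonneg), Real.volume_Icc, right_eq_one]
  · rw [unitInterval.volume_apply, Subtype.image_preimage_coe, Set.inter_eq_self_of_subset_right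
      (Set.Ico_subset_Icc_self.trans (Set.Icc_subset_Icc left_nonneg right_le_one)),
      Real.volume_Ico]

lemma map_gridIdx_volume : volume.map (gridIdx k hk) = (k : ENNReal)⁻¹ • Measure.count := by
  refine Measure.ext_of_singleton fun i => ?_
  have preimage_eq : gridIdx k hk ⁻¹' {i} = Ik k i := Set.ext fun _ => gridIdx_eq_iff_mem_Ik hk
  rw [Measure.map_apply (measurable_gridIdx hk) (measurableSet_singleton i), preimage_eq,
    volume_Ik, Measure.smul_apply, Measure.count_singleton, smul_eq_mul, mul_one]

lemma integral_comp_gridIdx {E : Type*} [NormedAddCommGroup E] [NormedSpace ℝ E]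
    [CompleteSpace E] (h : Fin k → E) :
    ∫ u, h (gridIdx k hk u) = (k : ℝ)⁻¹ • ∑ i, h i := by
  rw [← integral_map (measurable_gridIdx hk).aemeasurable
      (StronglyMeasurable.of_discrete (f := h)).aestronglyMeasurable,
    map_gridIdx_volume, integral_smul_measure, integral_count, ENNReal.toReal_inv,
    ENNReal.toReal_natCast]

end GridIdx

section StepKernel

variable {k : ℕ} (hk : 0 < k) {f : Fin k → unitInterval → ℝ}

lemma measurable_stepKernel (hf : ∀ i, Measurable (f i)) : Measurable (stepKernel hk f) := by
  have uncurried : Measurable fun q : unitInterval × Fin k => f q.2 q.1 :=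
    measurable_from_prod_countable_left hf
  exact (uncurried.comp (measurable_id.prodMap (measurable_gridIdx hk))).const_mul _

lemma integral_stepKernel_right (f : Fin k → unitInterval → ℝ) (x : unitInterval) :
    ∫ v, stepKernel hk f (x, v) = ∑ i, f i x := by
  have hk' : (k : ℝ) ≠ 0 := by exact_mod_cast hk.ne'
  simp only [stepKernel]
  rw [integral_const_mul, integral_comp_gridIdx hk fun i => f i x, smul_eq_mul,
    mul_inv_cancel_left₀ hk']

lemma integral_stepKernel_left (f : Fin k → unitInterval → ℝ) (y : unitInterval) :
    ∫ u, stepKernel hk f (u, y) = k * ∫ u, f (gridIdx k hk y) u :=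
  integral_const_mul _ _

lemma phiFn_stepKernel (f : Fin k → unitInterval → ℝ) (μ : Measure Sq) (p : Sq) :
    phiFn (stepKernel hk f) μ p =
      (k : ℝ) ^ 2 * densityMatrix f μ (gridIdx k hk p.1) (gridIdx k hk p.2) := by
  rw [phiFn, densityMatrix, ← integral_const_mul]
  congr 1 with q
  simp only [stepKernel]
  ring

lemma phiMeas_stepKernel (f : Fin k → unitInterval → ℝ) (μ : Measure Sq) :
    PhiMeas (stepKernel hk f) μ = muM (densityMatrix f μ) := by
  simp only [PhiMeas, muM, dif_pos hk, phiFn_stepKernel]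

namespace IsFracPartition

lemma le_one (hf : IsFracPartition k f) (i : Fin k) (x : unitInterval) : f i x ≤ 1 := by
  obtain ⟨-, hnonneg, hsum, -⟩ := hf
  calc f i x ≤ ∑ j, f j x :=
        Finset.single_le_sum (fun j _ => hnonneg j x) (Finset.mem_univ i)
    _ = 1 := hsum x

lemma stepKernel_le (hf : IsFracPartition k f) (p : Sq) : stepKernel hk f p ≤ k :=
  mul_le_of_le_one_right k.cast_nonneg (hf.le_one _ _)

lemma fairlyDistributed_stepKernel (hf : IsFracPartition k f) :
    FairlyDistributed (stepKernel hk f) := by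
  have ⟨hmeas, hnonneg, hsum, hint⟩ := hf
  have hk' : (k : ℝ) ≠ 0 := by exact_mod_cast hk.ne'
  exact {
    measurable := measurable_stepKernel hk hmeas
    nonneg := fun _ => mul_nonneg k.cast_nonneg (hnonneg _ _)
    bounded := ⟨k, hf.stepKernel_le hk⟩
    row := fun x => by rw [integral_stepKernel_right, hsum]
    col := fun y => by rw [integral_stepKernel_left, hint, mul_one_div_cancel hk'] }

end IsFracPartition

end StepKernel

instance (μ : SGraphon) : IsProbabilityMeasure μ.toMeasure := μ.1.2

theorem stmt18_general (μ : Measure Sq) [IsFiniteMeasure μ] {k : ℕ} (hk : 0 < k)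
    {f : Fin k → unitInterval → ℝ} (hf : IsFracPartition k f) :
    FairlyDistributed (stepKernel hk f) ∧ (∀ p, stepKernel hk f p ≤ k) ∧
      PhiMeas (stepKernel hk f) μ = muM (densityMatrix f μ) :=
  ⟨hf.fairlyDistributed_stepKernel hk, hf.stepKernel_le hk, phiMeas_stepKernel hk f μ⟩

/-- Given an s-graphon `μ`, a fractional partition `f₁,…,f_k` by continuous
functions with density matrix `M`, the function `g(x,y) = k f_i(x)` for `y ∈ I_i` is a bounded
Borel fairly distributed function with values in `[0,k]`, and `Φ(g,μ) = μ_M`. -/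
theorem stmt18 (μ : SGraphon) (k : ℕ) (hk : 0 < k) (F : Fin k → unitInterval → ℝ)
    (hcont : ∀ i, Continuous (F i)) (hnn : ∀ i x, 0 ≤ F i x)
    (hsum : ∀ x, ∑ i, F i x = 1) (hint : ∀ i, ∫ x, F i x = 1 / k) :
    letI M : Matrix (Fin k) (Fin k) ℝ := fun i j => ∫ p, F i p.1 * F j p.2 ∂μ.toMeasure
    letI g : Sq → ℝ := fun p => (k : ℝ) * F (gridIdx k hk p.2) p.1
    FairlyDistributed g ∧ (∀ p, g p ≤ k) ∧ PhiMeas g μ.toMeasure = muM M :=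
  stmt18_general μ.toMeasure hk ⟨fun i => (hcont i).measurable, hnn, hsum, hint⟩

end
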